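/- Let k ≥ 3 and let N be the k×(k−2) matrix over the polynomial ring ℤ[a,b,c] (rows indexed 0,…,k−1, columns indexed 0,…,k−3) with entries N_{r,s} = a if r = s, N_{r,s} = b if r = s+1, N_{r,s} = c if r = s+2, and 0 otherwise. Then for every 0 ≤ p ≤ k−3, the determinant of the (k−2)×(k−2) submatrix of N obtained by deleting rows p and p+2 equals a^p · b · c^{k−3−p}. -/

import Mathlib

/-!
Row `t < p` of `N(p, p+2)` is row `t` of `N`, with `a` on the diagonal and nothing to its right;
row `t > p` is row `t + 2` of `N`, with `c` on the diagonal and nothing to its left. Row `p` is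
row `p + 1` of `N`, with `b` on the diagonal. Cutting rows and columns at `p` thus gives a block
lower triangular matrix whose first diagonal block is lower triangular and whose second one is
upper triangular, so the determinant is the product of the diagonal entries
(`det_Nsub_eq_prod_diag`), namely `a^p b c^{k-3-p}`.
-/

/-!
Maximal minors of the recurrence matrix `N` of the polar variety `V(k)`.
-/

open MvPolynomial

noncomputable section

namespace Nminor

/-- The coefficient ring `ℤ[a,b,c]`; variables `0,1,2 = a,b,c`. -/
abbrev R : Type := MvPolynomial (Fin 3) ℤ

/-- The variable `a`. -/
def a : R := X 0

/-- The variable `b`. -/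
def b : R := X 1

/-- The variable `c`. -/
def c : R := X 2

/-- Entry of the `k × (k-2)` matrix `N`: `a` if `r = s`, `b` if `r = s+1`,
`c` if `r = s+2`, and `0` otherwise. -/
def Nent (r s : ℕ) : R :=
  if r = s then a else if r = s + 1 then b else if r = s + 2 then c else 0

/-- The index (among `0,…,k-1`) of the `t`-th remaining row after deleting
rows `p` and `q` (where `p < q`). -/
def skip (p q t : ℕ) : ℕ := if t < p then t else if t < q - 1 then t + 1 else t + 2

/-- The `(k-2) × (k-2)` submatrix `N(p,q)` of `N` obtained by deleting rows
`p` and `q`. -/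
def Nsub (k p q : ℕ) : Matrix (Fin (k - 2)) (Fin (k - 2)) R :=
  fun t s => Nent (skip p q (t : ℕ)) (s : ℕ)

end Nminor

open Nminor in
/-- The diagonal of `N(p, p+2)`: `a` above row `p`, `b` in row `p`, `c` below it. -/
lemma Nent_skip_diag (p t : ℕ) :
    Nent (skip p (p + 2) t) t = if t < p then a else if t = p then b else c := by
  unfold Nent skip
  split_ifs <;> first | rfl | omega

open Nminor in
/-- The rows above `p` are the rows `0, …, p-1` of `N`, which are lower triangular. -/
lemma Nent_skip_upper {p t s : ℕ} (ht : t < p) (hts : t < s) :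
    Nent (skip p (p + 2) t) s = 0 := by
  unfold Nent skip
  split_ifs <;> first | rfl | omega

open Nminor in
/-- From row `p` on, the only possible entries left of the diagonal lie in row `p`, and those
are in columns `< p`; so the lower right block is upper triangular. -/
lemma Nent_skip_lower {p t s : ℕ} (hs : p ≤ s) (hst : s < t) :
    Nent (skip p (p + 2) t) s = 0 := by
  unfold Nent skip
  split_ifs <;> first | rfl | omega

open Nminor in
/-- Splitting the indices at `p` makes `N(p, p+2)` block lower triangular with triangular
diagonal blocks, so its determinant is the product of its diagonal. -/
lemma det_Nsub_eq_prod_diag (k p : ℕ) :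
    (Nsub k p (p + 2)).det = ∏ i, Nsub k p (p + 2) i i := by
  rw [Matrix.twoBlockTriangular_det' _ (fun i : Fin (k - 2) => (i : ℕ) < p),
    Matrix.det_of_isLowerTriangular, Matrix.det_of_isUpperTriangular]
  · exact Fintype.prod_subtype_mul_prod_subtype (fun i : Fin (k - 2) => (i : ℕ) < p)
      (fun i => Nsub k p (p + 2) i i)
  · intro i j hij
    exact Nent_skip_lower (not_lt.mp j.2) hij
  · intro i j hij
    exact Nent_skip_upper i.2 hij
  · intro i hi j hj
    exact Nent_skip_upper hi (lt_of_lt_of_le hi (not_lt.mp hj))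

open Nminor in
/-- For `k ≥ 3` and `0 ≤ p ≤ k-3`, deleting rows `p` and `p+2` of `N` gives a
`(k-2) × (k-2)` minor equal to `a^p b c^{k-3-p}`. -/
theorem det_N_delete_rows_p_p2 (k p : ℕ) (hk : 3 ≤ k) (hp : p ≤ k - 3) :
    (Nsub k p (p + 2)).det = a ^ p * b * c ^ (k - 3 - p) := by
  rw [det_Nsub_eq_prod_diag]
  simp only [Nsub, Nent_skip_diag]
  rw [Fin.prod_univ_eq_prod_range (fun t => if t < p then a else if t = p then b else c) (k - 2),
    show k - 2 = (p + 1) + (k - 3 - p) by omega, Finset.prod_range_add, Finset.prod_range_succ]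
  congr 1
  · congr 1
    · rw [Finset.prod_congr rfl (g := fun _ => a)]
      · simp
      · intro t ht
        simp [Finset.mem_range.mp ht]
    · simp
  · rw [Finset.prod_congr rfl (g := fun _ => c)]
    · simp
    · intro t _
      rw [if_neg (by omega), if_neg (by omega)]
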